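/- Let k be a field of characteristic 0, n ≥ 3, a_1, …, a_n ≥ 1 integers, and B = B_{k;a_1,…,a_n} the Pham–Brieskorn ring with its ℕ-grading. Then: (a) the integers L/L_1, …, L/L_n are pairwise relatively prime; (b) e(B) = 1 and ē(B) = ∏_{i=1}^n (L/L_i); (c) B is saturated in codimension 1 if and only if L_i = L for every i; (d) for every positive divisor d of ∏_{i=1}^n (L/L_i), there is a ring isomorphism from the Veronese subring B^{(d)} onto B_{k;a_1',…,a_n'} that maps homogeneous elements to homogeneous elements, where a_i' = gcd(a_i, L_i) · ((L/L_i)/gcd(d, L/L_i)) for each i. -/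

import Mathlib

noncomputable section

/-- A derivation is locally nilpotent. -/
def IsLND {R : Type*} [CommRing R] (D : Derivation ℤ R R) : Prop :=
  ∀ b : R, ∃ n : ℕ, 0 < n ∧ (⇑D)^[n] b = 0

/-- Kernel of a derivation, as a subring. -/
def kerDer {R : Type*} [CommRing R] (D : Derivation ℤ R R) : Subring R where
  carrier := {x | D x = 0}
  one_mem' := by simp
  mul_mem' := by
    intro a b ha hb
    simp only [Set.mem_setOf_eq] at *
    rw [Derivation.leibniz, ha, hb]
    simp
  add_mem' := by
    intro a b ha hb
    simp only [Set.mem_setOf_eq] at *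
    rw [map_add, ha, hb, add_zero]
  zero_mem' := by simp
  neg_mem' := by
    intro a ha
    simp only [Set.mem_setOf_eq] at *
    rw [map_neg, ha, neg_zero]

section Graded

variable {G : Type*} [AddCommGroup G] {B : Type*} [CommRing B]

/-- The Veronese subring `B^{(H)} = ⊕_{i ∈ H} B_i` of a `G`-graded ring,
realized as the subring generated by the homogeneous elements whose degree lies in `H`. -/
def verSub (𝒜 : G → AddSubgroup B) (H : AddSubgroup G) : Subring B :=
  Subring.closure (⋃ i ∈ (H : Set G), (𝒜 i : Set B))

/-- 𝔾(B): the subgroup of G generated by the degrees of nonzero homogeneous elements. -/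
def Gsub (𝒜 : G → AddSubgroup B) : AddSubgroup G :=
  AddSubgroup.closure { i : G | 𝒜 i ≠ ⊥ }

/-- `H ∈ 𝕋(B)`: the quotient `𝔾(B)/(H ∩ 𝔾(B))` is torsion. -/
def Tmem (𝒜 : G → AddSubgroup B) (H : AddSubgroup G) : Prop :=
  ∀ g ∈ Gsub 𝒜, ∃ n : ℕ, 0 < n ∧ n • g ∈ H

/-- A homogeneous derivation of `B`. -/
def IsHomogDer (𝒜 : G → AddSubgroup B) (D : Derivation ℤ B B) : Prop :=
  ∃ d : G, ∀ (i : G) (x : B), x ∈ 𝒜 i → D x ∈ 𝒜 (i + d)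

/-- A homogeneous derivation of a graded subring `S` of `B`. -/
def IsHomogDerOn (𝒜 : G → AddSubgroup B) (S : Subring B) (D : Derivation ℤ S S) : Prop :=
  ∃ d : G, ∀ (i : G) (x : S), (x : B) ∈ 𝒜 i → ((D x : S) : B) ∈ 𝒜 (i + d)

/-- 𝕄̄(B,p): the subgroup of G generated by the degrees i with B_i ⊄ p. -/
def Mbar (𝒜 : G → AddSubgroup B) (p : Ideal B) : AddSubgroup G :=
  AddSubgroup.closure { i : G | ¬ (𝒜 i : Set B) ⊆ (p : Set B) }

/-- A prime ideal of height 1. -/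
def heightOne {R : Type*} [CommRing R] (p : Ideal R) : Prop :=
  p.IsPrime ∧ (∃ q : Ideal R, q.IsPrime ∧ q < p) ∧
    ∀ q r : Ideal R, q.IsPrime → r.IsPrime → q < r → r < p → False

open Classical in
/-- 𝔾̄(B). -/
def Gbar (𝒜 : G → AddSubgroup B) : AddSubgroup G :=
  if ∃ p : Ideal B, heightOne p then ⨅ p : {p : Ideal B // heightOne p}, Mbar 𝒜 p.1
  else Gsub 𝒜

end Graded

/-- The nonnegative generator of a subgroup of ℤ (so that the gcd of a set of integers
is `groupGen` of the subgroup it generates, and the lcm of a set of integers is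
`groupGen` of the intersection of the subgroups its elements generate). -/
noncomputable def groupGen (H : AddSubgroup ℤ) : ℕ :=
  (Submodule.IsPrincipal.generator (AddSubgroup.toIntSubmodule H : Ideal ℤ)).natAbs

section ZGraded

variable {B : Type*} [CommRing B]

/-- The set of height-1 homogeneous prime ideals of a ℤ-graded ring. -/
def homogHt1 (𝒜 : ℤ → AddSubgroup B) : Set (Ideal B) :=
  { p | heightOne p ∧ p = Ideal.span { x : B | x ∈ p ∧ ∃ i : ℤ, x ∈ 𝒜 i } }

/-- The saturation index e(B) = gcd{ n : B_n ≠ 0 } of a ℤ-graded ring. -/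
noncomputable def eB (𝒜 : ℤ → AddSubgroup B) : ℕ :=
  groupGen (Gsub 𝒜)

open Classical in
/-- The codimension-1 saturation index ē(B) = lcm{ e(B/p) : p ∈ Z } (Z the set of
height-1 homogeneous primes) if Z ≠ ∅, and ē(B) = e(B) if Z = ∅.  Here
e(B/p)ℤ = 𝕄̄(B,p), so the lcm is computed as the intersection of the 𝕄̄(B,p). -/
noncomputable def ebarB (𝒜 : ℤ → AddSubgroup B) : ℕ :=
  if (homogHt1 𝒜).Nonempty then groupGen (⨅ p : homogHt1 𝒜, Mbar 𝒜 p.1) else eB 𝒜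

end ZGraded

section PB

/-- The Pham–Brieskorn ring B_{k;a₁,…,aₙ} = k[X₁,…,Xₙ]/(X₁^{a₁} + ⋯ + Xₙ^{aₙ}). -/
noncomputable abbrev PBring (k : Type*) [Field k] {n : ℕ} (a : Fin n → ℕ) :=
  MvPolynomial (Fin n) k ⧸
    Ideal.span ({∑ i : Fin n, MvPolynomial.X i ^ a i} : Set (MvPolynomial (Fin n) k))

/-- L = lcm(a₁,…,aₙ). -/
def Ltot {n : ℕ} (a : Fin n → ℕ) : ℕ := Finset.univ.lcm a

/-- Lᵢ = lcm{ aⱼ : j ≠ i }. -/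
def Lpart {n : ℕ} (a : Fin n → ℕ) (i : Fin n) : ℕ := (Finset.univ.erase i).lcm a

/-- The degree-m part of the Pham–Brieskorn ring (for its ℕ-grading, in which the
image xᵢ of Xᵢ is homogeneous of degree L/aᵢ): the image of the space of weighted
homogeneous polynomials of weighted degree m. -/
noncomputable def PBpiece (k : Type*) [Field k] {n : ℕ} (a : Fin n → ℕ) (m : ℤ) :
    AddSubgroup (PBring k a) :=
  if 0 ≤ m then
    AddSubgroup.map
      (Ideal.Quotient.mk _).toAddMonoidHom
      ((MvPolynomial.weightedHomogeneousSubmodule k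
          (fun i => Ltot a / a i) m.toNat).toAddSubgroup)
  else ⊥

/-- The d-th Veronese subring of the Pham–Brieskorn ring. -/
noncomputable def PBver (k : Type*) [Field k] {n : ℕ} (a : Fin n → ℕ) (d : ℕ) :
    Subring (PBring k a) :=
  Subring.closure (⋃ m ∈ {m : ℤ | (d : ℤ) ∣ m}, (PBpiece k a m : Set (PBring k a)))

/-- The exponents a′ of the Pham–Brieskorn ring isomorphic to the d-th Veronese subring:
aᵢ′ = gcd(aᵢ, Lᵢ) · ((L/Lᵢ)/gcd(d, L/Lᵢ)). -/
def PBexp {n : ℕ} (a : Fin n → ℕ) (d : ℕ) : Fin n → ℕ :=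
  fun i => Nat.gcd (a i) (Lpart a i) * ((Ltot a / Lpart a i) / Nat.gcd d (Ltot a / Lpart a i))

end PB

/-!
Let `p` be a prime of height one. For `n ≥ 3` it contains at most one `xᵢ`, because a prime of `B`
containing `s < n` of the variables has height at least `s`. The degrees `L / aⱼ` of the `xⱼ` with
`j ≠ i` have gcd `L / Lᵢ`, so `e(B/p) = L / Lᵢ` when `xᵢ ∈ p`, and `e(B/p)` divides some `L / Lᵢ`
in any case. The first alternative occurs for each `i`, at a minimal prime of `xᵢ`; as the `L / Lᵢ`
are pairwise coprime, `ē(B)` is their product.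

For the Veronese subring put `gᵢ = gcd(d, L / Lᵢ)`, so that `aᵢ = gᵢ aᵢ′`. If `d` divides the degree
of a monomial then `gᵢ` divides its `i`-th exponent, since `L / Lᵢ` divides the degree of `xⱼ` for
`j ≠ i` and is coprime to that of `xᵢ`. Conversely `d` divides the degree of `xᵢ ^ gᵢ`. Hence
`B^{(d)}` is the image of `xᵢ ↦ xᵢ ^ gᵢ`, which is injective because the substitution on polynomials
has a retraction, division of exponents by `g`, that is linear over the source ring.
-/

section Arithmetic

lemma gcd_div_eq_div_lcm {ι : Type*} {s : Finset ι} (hs : s.Nonempty) {f : ι → ℕ} {L : ℕ}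
    (hf : ∀ j ∈ s, f j ∣ L) : (s.gcd fun j => L / f j) = L / s.lcm f := by
  have hlcm : s.lcm f ∣ L := Finset.lcm_dvd hf
  refine Nat.dvd_antisymm ?_
    (Finset.dvd_gcd fun j hj => Nat.div_dvd_div_left hlcm (Finset.dvd_lcm hj))
  obtain ⟨j, hj⟩ := hs
  have hgcd : (s.gcd fun j => L / f j) ∣ L :=
    (Finset.gcd_dvd hj).trans (Nat.div_dvd_of_dvd (hf j hj))
  rw [Nat.dvd_div_iff_mul_dvd hlcm, mul_comm, ← Nat.dvd_div_iff_mul_dvd hgcd]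
  refine Finset.lcm_dvd fun i hi => ?_
  rw [Nat.dvd_div_iff_mul_dvd hgcd, mul_comm, ← Nat.dvd_div_iff_mul_dvd (hf i hi)]
  exact Finset.gcd_dvd hi

lemma natCast_gcd_mem {ι : Type*} {s : Finset ι} {f : ι → ℕ} {H : AddSubgroup ℤ}
    (hf : ∀ j ∈ s, (f j : ℤ) ∈ H) : ((s.gcd f : ℕ) : ℤ) ∈ H := by
  obtain ⟨g, rfl⟩ := Int.subgroup_cyclic H
  simp only [← AddSubgroup.zmultiples_eq_closure, Int.mem_zmultiples_iff, Int.dvd_natCast] at hf ⊢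
  exact Finset.dvd_gcd hf

lemma groupGen_zmultiples (m : ℕ) : groupGen (AddSubgroup.zmultiples (m : ℤ)) = m := by
  have hspan : AddSubgroup.toIntSubmodule (AddSubgroup.zmultiples (m : ℤ)) =
      Ideal.span {(m : ℤ)} :=
    SetLike.ext fun x => Int.mem_zmultiples_iff.trans Ideal.mem_span_singleton.symm
  have hassoc := Ideal.span_singleton_eq_span_singleton.mp
    ((Ideal.span_singleton_generator _).trans hspan)
  exact Int.associated_iff_natAbs.mp hassoc

lemma dvd_weight_iff {σ : Type*} {w : σ → ℕ} {d : ℕ} {i : σ} (hd : ∀ j ≠ i, d ∣ w j)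
    (e : σ →₀ ℕ) : d ∣ Finsupp.weight w e ↔ d ∣ e i * w i := by
  have hsplit : Finsupp.weight w e = e i * w i + Finsupp.weight w (e.erase i) := by
    rw [← smul_eq_mul, ← Finsupp.weight_single, ← map_add, Finsupp.single_add_erase]
  rw [hsplit]
  refine Nat.dvd_add_left (Finset.dvd_sum fun j hj => (hd j ?_).mul_left _)
  rintro rfl
  simp at hj

end Arithmetic

section Height

lemma heightOne_iff {R : Type*} [CommRing R] {p : Ideal R} :
    heightOne p ↔ p.IsPrime ∧ p.height = 1 := by
  refine and_congr_right fun hp => ?_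
  have height_eq_zero_iff (q : Ideal R) [q.IsPrime] :
      q.height = 0 ↔ ∀ r : Ideal R, r.IsPrime → ¬ r < q := by
    simpa using Ideal.height_le_iff (p := q) (n := 0)
  have height_le_one_iff :
      p.height ≤ 1 ↔ ∀ q r : Ideal R, q.IsPrime → r.IsPrime → q < r → r < p → False := by
    have h := Ideal.height_le_iff (p := p) (n := 1)
    simp only [Nat.cast_one, Order.lt_one_iff] at h
    rw [h]
    refine ⟨fun h q r hq hr hqr hrp => (height_eq_zero_iff r).mp (h r hr hrp) q hq hqr,
      fun h r hr hrp => (height_eq_zero_iff r).mpr fun q hq hqr => h q r hq hr hqr hrp⟩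
  rw [← height_le_one_iff, le_antisymm_iff (a := p.height), and_comm, Order.one_le_iff_ne_zero,
    Ne, height_eq_zero_iff p]
  simp only [not_forall, not_not, exists_prop]

lemma isHomogeneous_of_mem_minimalPrimes {ι σ A : Type*} [CommRing A] [AddCommMonoid ι]
    [LinearOrder ι] [IsOrderedCancelAddMonoid ι] [SetLike σ A] [AddSubmonoidClass σ A] {𝒜 : ι → σ}
    [GradedRing 𝒜] {I P : Ideal A} (hI : I.IsHomogeneous 𝒜) (hP : P ∈ I.minimalPrimes) :
    P.IsHomogeneous 𝒜 := by
  have hcore : (P.homogeneousCore 𝒜).toIdeal = P := by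
    refine le_antisymm (Ideal.toIdeal_homogeneousCore_le 𝒜 P)
      (hP.2 ⟨hP.1.1.homogeneousCore, ?_⟩ (Ideal.toIdeal_homogeneousCore_le 𝒜 P))
    rw [← hI.toIdeal_homogeneousCore_eq_self]
    exact Ideal.homogeneousCore_mono 𝒜 hP.1.2
  exact hcore ▸ HomogeneousIdeal.isHomogeneous _

end Height

section CoordinatePrimes

open MvPolynomial

lemma X_mem_span_X_image_iff {σ R : Type*} [CommSemiring R] [Nontrivial R] {s : Set σ} {t : σ} :
    (X t : MvPolynomial σ R) ∈ Ideal.span (X '' s) ↔ t ∈ s := by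
  classical
  simp [mem_ideal_span_X_image, support_X, Finsupp.single_apply]

variable {σ R : Type*} [CommRing R] [IsDomain R]

lemma isPrime_span_X_image (s : Set σ) :
    (Ideal.span (X '' s) : Ideal (MvPolynomial σ R)).IsPrime := by
  classical
  let kill : MvPolynomial σ R →ₐ[R] MvPolynomial σ R := aeval fun j => if j ∈ s then 0 else X j
  set I : Ideal (MvPolynomial σ R) := Ideal.span (X '' s)
  have hkill : (Ideal.Quotient.mkₐ R I).comp kill = Ideal.Quotient.mkₐ R I := by
    ext j
    by_cases hj : j ∈ s
    · have hX : (X j : MvPolynomial σ R) ∈ I := Ideal.subset_span ⟨j, hj, rfl⟩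
      simpa [kill, hj] using (Ideal.Quotient.eq_zero_iff_mem.mpr hX).symm
    · simp [kill, hj]
  suffices I = RingHom.ker kill from this ▸ RingHom.ker_isPrime kill
  refine le_antisymm (Ideal.span_le.mpr ?_) fun f hf => ?_
  · rintro _ ⟨j, hj, rfl⟩
    simp [kill, hj]
  · have hmk := DFunLike.congr_fun hkill f
    rw [AlgHom.comp_apply, RingHom.mem_ker.mp hf, map_zero] at hmk
    exact Ideal.Quotient.eq_zero_iff_mem.mp hmk.symm

lemma card_le_height_span_X_image (s : Finset σ) :
    (s.card : ℕ∞) ≤ (Ideal.span (X '' (s : Set σ)) : Ideal (MvPolynomial σ R)).height := by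
  classical
  induction s using Finset.induction_on with
  | empty => simp
  | insert t s ht ih =>
    have := isPrime_span_X_image (R := R) (s : Set σ)
    have := isPrime_span_X_image (R := R) ((insert t s : Finset σ) : Set σ)
    have hlt : (Ideal.span (X '' (s : Set σ)) : Ideal (MvPolynomial σ R)) <
        Ideal.span (X '' (insert t s : Finset σ)) := by
      refine SetLike.lt_iff_le_and_exists.mpr ⟨Ideal.span_mono (Set.image_mono ?_), X t, ?_, ?_⟩
      · exact Finset.coe_subset.mpr (Finset.subset_insert t s)
      · simp [X_mem_span_X_image_iff]
      · simpa [X_mem_span_X_image_iff] using ht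
    rw [Finset.card_insert_of_notMem ht, Nat.cast_add, Nat.cast_one]
    exact (add_le_add_left ih 1).trans (Ideal.height_add_one_le_of_lt_of_isPrime hlt)

lemma card_le_height_of_X_mem [IsNoetherianRing R] [Finite σ] {F : MvPolynomial σ R}
    {s : Finset σ} (hF : F ∉ Ideal.span (X '' (s : Set σ)))
    {p : Ideal (MvPolynomial σ R ⧸ Ideal.span {F})} [p.IsPrime]
    (hp : ∀ t ∈ s, Ideal.Quotient.mk (Ideal.span {F}) (X t) ∈ p) : (s.card : ℕ∞) ≤ p.height := by
  set P := p.comap (Ideal.Quotient.mk (Ideal.span {F})) with hPdef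
  have hFP : F ∈ P := by
    rw [hPdef, Ideal.mem_comap, Ideal.Quotient.mk_singleton_self]
    exact p.zero_mem
  have hlt : Ideal.span (X '' (s : Set σ)) < P := by
    refine SetLike.lt_iff_le_and_exists.mpr ⟨Ideal.span_le.mpr ?_, F, hFP, hF⟩
    rintro _ ⟨t, ht, rfl⟩
    exact hp t ht
  have := isPrime_span_X_image (R := R) (s : Set σ)
  refine (ENat.add_le_add_iff_right ENat.one_ne_top).mp ?_
  calc (s.card : ℕ∞) + 1
      ≤ (Ideal.span (X '' (s : Set σ)) : Ideal (MvPolynomial σ R)).height + 1 := by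
        gcongr
        exact card_le_height_span_X_image s
    _ ≤ P.height := Ideal.height_add_one_le_of_lt_of_isPrime hlt
    _ ≤ (P.map (Ideal.Quotient.mk (Ideal.span {F}))).height + 1 :=
        Ideal.height_le_height_add_one_of_mem hFP
    _ = p.height + 1 := by
        rw [Ideal.map_comap_of_surjective _ Ideal.Quotient.mk_surjective]

end CoordinatePrimes

section ExponentScaling

open MvPolynomial

variable {σ R : Type*} [CommSemiring R]

/-- The endomorphism `X i ↦ X i ^ g i`, which multiplies exponent vectors pointwise by `g`. -/
def powSubst (g : σ → ℕ) : MvPolynomial σ R →ₐ[R] MvPolynomial σ R :=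
  aeval fun i => X i ^ g i

lemma powSubst_X (g : σ → ℕ) (i : σ) : powSubst g (X i : MvPolynomial σ R) = X i ^ g i :=
  aeval_X _ i

lemma powSubst_monomial (g : σ → ℕ) (e : σ →₀ ℕ) (c : R) :
    powSubst g (monomial e c) = monomial (g • e) c := by
  rw [powSubst, aeval_monomial, algebraMap_eq, monomial_eq (s := g • e)]
  congr 1
  rw [Finsupp.prod_of_support_subset (g • e) (s := e.support)]
  · simp [Finsupp.prod, pow_mul, smul_eq_mul]
  · intro i
    simp +contextual
  · simp

lemma pointwise_smul_injective {g : σ → ℕ} (hg : ∀ i, g i ≠ 0) :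
    Function.Injective fun e : σ →₀ ℕ => g • e := fun _ _ h => Finsupp.ext fun i =>
  Nat.eq_of_mul_eq_mul_left (Nat.pos_of_ne_zero (hg i)) (DFunLike.congr_fun h i)

/-- The additive retraction of `powSubst g`: it discards the monomials that are not in the image
of `powSubst g` and divides the exponents of the others by `g`. -/
def powContract (g : σ → ℕ) (hg : ∀ i, g i ≠ 0) : MvPolynomial σ R →+ MvPolynomial σ R :=
  AddMonoidAlgebra.comapDomainAddMonoidHom (g • ·) (pointwise_smul_injective hg)

lemma coeff_powContract {g : σ → ℕ} (hg : ∀ i, g i ≠ 0) (p : MvPolynomial σ R) (e : σ →₀ ℕ) :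
    coeff e (powContract g hg p) = coeff (g • e) p :=
  rfl

lemma powContract_powSubst_mul {g : σ → ℕ} (hg : ∀ i, g i ≠ 0) (p q : MvPolynomial σ R) :
    powContract g hg (powSubst g p * q) = p * powContract g hg q := by
  classical
  induction p using MvPolynomial.induction_on' with
  | monomial e c =>
    ext e'
    have hle : g • e ≤ g • e' ↔ e ≤ e' := by
      simp only [Finsupp.le_def, Finsupp.coe_pointwise_smul, Pi.smul_apply', smul_eq_mul]
      exact forall_congr' fun i => Nat.mul_le_mul_left_iff (Nat.pos_of_ne_zero (hg i))
    have hsub : g • e' - g • e = g • (e' - e) := by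
      ext i
      simp [Nat.mul_sub]
    rw [coeff_powContract, powSubst_monomial, coeff_monomial_mul', coeff_monomial_mul',
      coeff_powContract, hsub]
    simp only [hle]
  | add p p' hp hp' => simp only [map_add, add_mul, hp, hp']

lemma powContract_powSubst {g : σ → ℕ} (hg : ∀ i, g i ≠ 0) (p : MvPolynomial σ R) :
    powContract g hg (powSubst g p) = p := by
  have hone : powContract g hg (1 : MvPolynomial σ R) = 1 := by
    classical
    ext e
    simp only [coeff_powContract, coeff_one]
    congr 1
    simp [Finsupp.ext_iff, hg, eq_comm]
  simpa [hone] using powContract_powSubst_mul hg p 1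

end ExponentScaling

namespace PBring

/-- The degree `L / aᵢ` of `xᵢ` in the Pham–Brieskorn ring. -/
abbrev xDegree {n : ℕ} (a : Fin n → ℕ) (i : Fin n) : ℕ :=
  Ltot a / a i

section Degrees

variable {n : ℕ} {a : Fin n → ℕ}

lemma dvd_Ltot (a : Fin n → ℕ) (i : Fin n) : a i ∣ Ltot a :=
  Finset.dvd_lcm (Finset.mem_univ i)

lemma Lpart_dvd_Ltot (a : Fin n → ℕ) (i : Fin n) : Lpart a i ∣ Ltot a :=
  Finset.lcm_mono (Finset.erase_subset _ _)

lemma Ltot_ne_zero (ha : ∀ i, a i ≠ 0) : Ltot a ≠ 0 := by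
  simpa [Ltot, Finset.lcm_eq_zero_iff] using ha

lemma Lpart_ne_zero (ha : ∀ i, a i ≠ 0) (i : Fin n) : Lpart a i ≠ 0 :=
  ne_zero_of_dvd_ne_zero (Ltot_ne_zero ha) (Lpart_dvd_Ltot a i)

lemma lcm_Lpart (a : Fin n → ℕ) (i : Fin n) : (a i).lcm (Lpart a i) = Ltot a := by
  rw [Ltot, ← Finset.insert_erase (Finset.mem_univ i), Finset.lcm_insert]
  rfl

lemma Ltot_div_Lpart_eq_one_iff (ha : ∀ i, a i ≠ 0) {i : Fin n} :
    Ltot a / Lpart a i = 1 ↔ Lpart a i = Ltot a := by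
  rw [Nat.div_eq_iff_eq_mul_left (Nat.pos_of_ne_zero (Lpart_ne_zero ha i)) (Lpart_dvd_Ltot a i),
    one_mul, eq_comm]

lemma gcd_mul_Ltot_div_Lpart (ha : ∀ i, a i ≠ 0) (i : Fin n) :
    (a i).gcd (Lpart a i) * (Ltot a / Lpart a i) = a i := by
  rw [← Nat.mul_div_assoc _ (Lpart_dvd_Ltot a i), ← lcm_Lpart a i, Nat.gcd_mul_lcm,
    Nat.mul_div_cancel _ (Nat.pos_of_ne_zero (Lpart_ne_zero ha i))]

lemma gcd_mul_PBexp (ha : ∀ i, a i ≠ 0) (d : ℕ) :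
    (fun i => d.gcd (Ltot a / Lpart a i)) * PBexp a d = a := by
  ext i
  rw [Pi.mul_apply, PBexp, mul_left_comm, Nat.mul_div_cancel' (Nat.gcd_dvd_right _ _),
    gcd_mul_Ltot_div_Lpart ha]

lemma gcd_xDegree [Nonempty (Fin n)] (ha : ∀ i, a i ≠ 0) : Finset.univ.gcd (xDegree a) = 1 := by
  rw [gcd_div_eq_div_lcm Finset.univ_nonempty fun j _ => dvd_Ltot a j]
  exact Nat.div_self (Nat.pos_of_ne_zero (Ltot_ne_zero ha))

lemma gcd_erase_xDegree [Nontrivial (Fin n)] (a : Fin n → ℕ) (i : Fin n) :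
    (Finset.univ.erase i).gcd (xDegree a) = Ltot a / Lpart a i :=
  gcd_div_eq_div_lcm (Finset.univ_nontrivial.erase_nonempty) fun j _ => dvd_Ltot a j

lemma Ltot_div_Lpart_dvd_xDegree {i j : Fin n} (hji : j ≠ i) :
    Ltot a / Lpart a i ∣ xDegree a j :=
  Nat.div_dvd_div_left (Lpart_dvd_Ltot a i)
    (Finset.dvd_lcm (Finset.mem_erase.mpr ⟨hji, Finset.mem_univ j⟩))

lemma coprime_Ltot_div_Lpart_xDegree (ha : ∀ i, a i ≠ 0) (i : Fin n) :
    Nat.Coprime (Ltot a / Lpart a i) (xDegree a i) := by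
  have : Nonempty (Fin n) := ⟨i⟩
  rw [Nat.Coprime, ← Nat.dvd_one, ← gcd_xDegree ha]
  refine Finset.dvd_gcd fun j _ => ?_
  rcases eq_or_ne j i with rfl | hji
  · exact Nat.gcd_dvd_right _ _
  · exact (Nat.gcd_dvd_left _ _).trans (Ltot_div_Lpart_dvd_xDegree hji)

lemma coprime_Ltot_div_Lpart (ha : ∀ i, a i ≠ 0) {i j : Fin n} (hij : i ≠ j) :
    Nat.Coprime (Ltot a / Lpart a i) (Ltot a / Lpart a j) :=
  (coprime_Ltot_div_Lpart_xDegree ha i).coprime_dvd_right (Ltot_div_Lpart_dvd_xDegree hij)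

lemma prod_Ltot_div_Lpart_dvd (ha : ∀ i, a i ≠ 0) (i : Fin n) :
    ∏ j, Ltot a / Lpart a j ∣ Ltot a / Lpart a i * xDegree a i := by
  rw [← Finset.mul_prod_erase _ _ (Finset.mem_univ i)]
  refine mul_dvd_mul_left _ (Finset.prod_dvd_of_isRelPrime ?_ fun j hj =>
    Ltot_div_Lpart_dvd_xDegree (Finset.ne_of_mem_erase hj).symm)
  exact fun j _ l _ hjl => Nat.coprime_iff_isRelPrime.mp (coprime_Ltot_div_Lpart ha hjl)

lemma gcd_dvd_of_dvd_weight (ha : ∀ i, a i ≠ 0) {d : ℕ} {e : Fin n →₀ ℕ}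
    (hd : d ∣ Finsupp.weight (xDegree a) e) (i : Fin n) : d.gcd (Ltot a / Lpart a i) ∣ e i := by
  have hmul : d.gcd (Ltot a / Lpart a i) ∣ e i * xDegree a i :=
    (dvd_weight_iff (fun j hji => (Nat.gcd_dvd_right _ _).trans (Ltot_div_Lpart_dvd_xDegree hji))
      e).mp ((Nat.gcd_dvd_left _ _).trans hd)
  exact ((coprime_Ltot_div_Lpart_xDegree ha i).coprime_dvd_left
    (Nat.gcd_dvd_right _ _)).dvd_of_dvd_mul_right hmul

lemma dvd_gcd_mul_xDegree (ha : ∀ i, a i ≠ 0) {d : ℕ} (hd : d ∣ ∏ i, Ltot a / Lpart a i)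
    (i : Fin n) : d ∣ d.gcd (Ltot a / Lpart a i) * xDegree a i := by
  rw [← Nat.gcd_mul_right]
  exact Nat.dvd_gcd (dvd_mul_right _ _) (hd.trans (prod_Ltot_div_Lpart_dvd ha i))

lemma Ltot_dvd_Ltot_mul (g b : Fin n → ℕ) : Ltot b ∣ Ltot (g * b) :=
  Finset.lcm_dvd fun i _ => (dvd_mul_left _ _).trans (dvd_Ltot (g * b) i)

lemma mul_xDegree_mul {g : Fin n → ℕ} (hg : ∀ i, g i ≠ 0) (b : Fin n → ℕ) (i : Fin n) :
    g i * xDegree (g * b) i = Ltot (g * b) / Ltot b * xDegree b i := by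
  rw [Nat.div_mul_div (Ltot_dvd_Ltot_mul g b) (dvd_Ltot b i),
    ← Nat.mul_div_assoc _ (dvd_Ltot (g * b) i), Pi.mul_apply,
    Nat.mul_div_mul_left _ _ (Nat.pos_of_ne_zero (hg i))]

end Degrees

section Grading

open MvPolynomial

/-- The defining polynomial `∑ Xᵢ ^ aᵢ` of the Pham–Brieskorn ring. -/
abbrev relation (k : Type*) [Field k] {n : ℕ} (a : Fin n → ℕ) : MvPolynomial (Fin n) k :=
  ∑ i, X i ^ a i

/-- The quotient map from the polynomial ring onto the Pham–Brieskorn ring. -/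
abbrev mk (k : Type*) [Field k] {n : ℕ} (a : Fin n → ℕ) : MvPolynomial (Fin n) k →+* PBring k a :=
  Ideal.Quotient.mk (Ideal.span {relation k a})

variable {k : Type*} [Field k] {n : ℕ} {a : Fin n → ℕ}

lemma mem_PBpiece_iff {m : ℤ} {y : PBring k a} :
    y ∈ PBpiece k a m ↔ ∃ f : MvPolynomial (Fin n) k,
      (∀ e ∈ f.support, (Finsupp.weight (xDegree a) e : ℤ) = m) ∧ mk k a f = y := by
  rcases lt_or_ge m 0 with hm | hm
  · rw [PBpiece, if_neg hm.not_ge, AddSubgroup.mem_bot]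
    constructor
    · rintro rfl
      exact ⟨0, by simp, map_zero _⟩
    · rintro ⟨f, hf, rfl⟩
      have hsupp : f.support = ∅ := Finset.eq_empty_of_forall_notMem fun e he => by
        have := hf e he
        omega
      rw [support_eq_empty.mp hsupp, map_zero]
  · lift m to ℕ using hm
    rw [PBpiece, if_pos (Int.natCast_nonneg m), AddSubgroup.mem_map]
    simp only [Nat.cast_inj, mem_support_iff]
    rfl

lemma mk_mem_PBpiece {f : MvPolynomial (Fin n) k} {m : ℕ}
    (hf : IsWeightedHomogeneous (xDegree a) f m) : mk k a f ∈ PBpiece k a m :=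
  mem_PBpiece_iff.mpr ⟨f, fun _ he => congrArg _ (hf (mem_support_iff.mp he)), rfl⟩

lemma mk_X_mem_PBpiece (i : Fin n) : mk k a (X i) ∈ PBpiece k a (xDegree a i : ℕ) :=
  mk_mem_PBpiece (isWeightedHomogeneous_X k _ i)

lemma isWeightedHomogeneous_relation (k : Type*) [Field k] (a : Fin n → ℕ) :
    IsWeightedHomogeneous (xDegree a) (relation k a) (Ltot a) := by
  refine IsWeightedHomogeneous.sum _ _ _ fun i _ => ?_
  simpa [Nat.mul_div_cancel' (dvd_Ltot a i)] using
    (isWeightedHomogeneous_X k (xDegree a) i).pow (a i)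

lemma relation_notMem_span_X_image (ha : ∀ i, a i ≠ 0) {s : Set (Fin n)} {l : Fin n} (hl : l ∉ s) :
    relation k a ∉ Ideal.span (X '' s) := by
  classical
  have hcoeff : coeff (Finsupp.single l (a l)) (relation k a) = 1 := by
    rw [coeff_sum, Finset.sum_eq_single l (fun i _ hil => ?_) (by simp)]
    · simp [X_pow_eq_monomial]
    · rw [X_pow_eq_monomial, coeff_monomial, if_neg]
      exact fun h => ha i (by simpa [hil] using DFunLike.congr_fun h i)
  intro hmem
  obtain ⟨i, his, hi⟩ := mem_ideal_span_X_image.mp hmem (Finsupp.single l (a l))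
    (by simp [mem_support_iff, hcoeff])
  exact hi (Finsupp.single_eq_of_ne (ne_of_mem_of_not_mem his hl))

lemma relation_mem_span_X (ha : ∀ i, a i ≠ 0) : relation k a ∈ Ideal.span (X '' Set.univ) :=
  Ideal.sum_mem _ fun i _ => Ideal.pow_mem_of_mem _
    (X_mem_span_X_image_iff.mpr (Set.mem_univ i)) _ (Nat.pos_of_ne_zero (ha i))

lemma mk_X_ne_zero [Nontrivial (Fin n)] (ha : ∀ i, a i ≠ 0) (i : Fin n) : mk k a (X i) ≠ 0 := by
  intro h
  obtain ⟨l, hl⟩ := exists_ne i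
  obtain ⟨c, hc⟩ := Ideal.mem_span_singleton.mp (Ideal.Quotient.eq_zero_iff_mem.mp h)
  have hrel : ¬ X i ∣ relation k a := by
    simpa [Ideal.mem_span_singleton] using
      relation_notMem_span_X_image (k := k) ha (s := {i}) (l := l) (by simpa using hl)
  obtain ⟨c', rfl⟩ := ((X_prime (R := k) (i := i)).dvd_or_dvd hc.dvd).resolve_left hrel
  have hunit : IsUnit (relation k a) := by
    refine IsUnit.of_mul_eq_one c' (mul_left_cancel₀ (X_ne_zero (R := k) i) ?_)
    rw [mul_left_comm, ← hc, mul_one]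
  exact (isPrime_span_X_image (R := k) (Set.univ : Set (Fin n))).ne_top
    (Ideal.eq_top_of_isUnit_mem _ (relation_mem_span_X ha) hunit)

attribute [local instance] weightedGradedAlgebra

lemma eq_span_of_comap_isHomogeneous {p : Ideal (PBring k a)}
    (hp : (p.comap (mk k a)).IsHomogeneous (weightedHomogeneousSubmodule k (xDegree a))) :
    p = Ideal.span {x | x ∈ p ∧ ∃ m : ℤ, x ∈ PBpiece k a m} := by
  obtain ⟨S, hS⟩ := (Ideal.IsHomogeneous.iff_exists _ _).mp hp
  have hSp : ∀ f ∈ S, mk k a f ∈ p := fun f hf =>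
    Ideal.mem_comap.mp (hS.ge (Ideal.subset_span ⟨f, hf, rfl⟩))
  refine le_antisymm ?_ (Ideal.span_le.mpr fun x hx => hx.1)
  calc p = (p.comap (mk k a)).map (mk k a) :=
        (Ideal.map_comap_of_surjective _ Ideal.Quotient.mk_surjective p).symm
    _ = Ideal.span (mk k a '' (Subtype.val '' S)) := by rw [hS, Ideal.map_span]
    _ ≤ _ := Ideal.span_mono ?_
  rintro _ ⟨_, ⟨f, hf, rfl⟩, rfl⟩
  obtain ⟨m, hm⟩ := f.2
  exact ⟨hSp f hf, m, mk_mem_PBpiece hm⟩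

end Grading

section HeightOnePrimes

open MvPolynomial

variable {k : Type*} [Field k] {n : ℕ} {a : Fin n → ℕ}

attribute [local instance] weightedGradedAlgebra

lemma comap_span_mk_X (i : Fin n) : (Ideal.span {mk k a (X i)}).comap (mk k a) =
    Ideal.span {relation k a} ⊔ Ideal.span {X i} := by
  rw [← Set.image_singleton (f := mk k a), ← Ideal.map_span, Ideal.comap_map_quotientMk]

lemma span_mk_X_ne_top (ha : ∀ i, a i ≠ 0) (i : Fin n) : Ideal.span {mk k a (X i)} ≠ ⊤ := by
  intro htop
  refine (isPrime_span_X_image (R := k) (Set.univ : Set (Fin n))).ne_top (top_le_iff.mp ?_)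
  rw [← Ideal.comap_top (f := mk k a), ← htop, comap_span_mk_X, sup_le_iff,
    Ideal.span_singleton_le_iff_mem, Ideal.span_singleton_le_iff_mem]
  exact ⟨relation_mem_span_X ha, X_mem_span_X_image_iff.mpr (Set.mem_univ i)⟩

lemma isHomogeneous_comap_span_mk_X (i : Fin n) :
    ((Ideal.span {mk k a (X i)}).comap (mk k a)).IsHomogeneous
      (weightedHomogeneousSubmodule k (xDegree a)) := by
  rw [comap_span_mk_X, ← Ideal.span_union, Set.singleton_union]
  refine Ideal.homogeneous_span _ _ ?_
  rintro _ (rfl | rfl)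
  · exact ⟨_, isWeightedHomogeneous_relation k a⟩
  · exact ⟨_, isWeightedHomogeneous_X k _ i⟩

lemma exists_mem_homogHt1_mk_X_mem [Nontrivial (Fin n)] (ha : ∀ i, a i ≠ 0) (i : Fin n) :
    ∃ p ∈ homogHt1 (PBpiece k a), mk k a (X i) ∈ p := by
  obtain ⟨p, hp⟩ := Ideal.nonempty_minimalPrimes (span_mk_X_ne_top (k := k) ha i)
  have hprime : p.IsPrime := hp.1.1
  have hXp : mk k a (X i) ∈ p := hp.1.2 (Ideal.mem_span_singleton_self _)
  have hcomap : p.comap (mk k a) ∈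
      ((Ideal.span {mk k a (X i)}).comap (mk k a)).minimalPrimes := by
    rw [Ideal.comap_minimalPrimes_eq_of_surjective Ideal.Quotient.mk_surjective]
    exact ⟨p, hp, rfl⟩
  obtain ⟨l, hl⟩ := exists_ne i
  have hheight : p.height = 1 := by
    refine le_antisymm (Ideal.height_le_one_of_isPrincipal_of_mem_minimalPrimes _ p hp) ?_
    simpa using card_le_height_of_X_mem (s := {i})
      (relation_notMem_span_X_image ha (l := l) (by simpa using hl)) (p := p) (by simpa using hXp)
  exact ⟨p, ⟨heightOne_iff.mpr ⟨hprime, hheight⟩, eq_span_of_comap_isHomogeneous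
    (isHomogeneous_of_mem_minimalPrimes (isHomogeneous_comap_span_mk_X i) hcomap)⟩, hXp⟩

lemma mk_X_notMem_of_heightOne (hn : 3 ≤ n) (ha : ∀ i, a i ≠ 0) {p : Ideal (PBring k a)}
    (hp : heightOne p) {i j : Fin n} (hij : i ≠ j) (hi : mk k a (X i) ∈ p) : mk k a (X j) ∉ p := by
  intro hj
  obtain ⟨hprime, hheight⟩ := heightOne_iff.mp hp
  obtain ⟨l, hli, hlj⟩ := Fin.exists_ne_and_ne_of_two_lt i j hn
  have hcard := card_le_height_of_X_mem (s := {i, j})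
    (relation_notMem_span_X_image ha (l := l) (by simp [hli, hlj])) (p := p) (by simp [hi, hj])
  rw [hheight, Finset.card_pair hij] at hcard
  exact absurd hcard (by norm_num)

lemma exists_forall_ne_mk_X_notMem (hn : 3 ≤ n) (ha : ∀ i, a i ≠ 0) {p : Ideal (PBring k a)}
    (hp : heightOne p) : ∃ i, ∀ j ≠ i, mk k a (X j) ∉ p := by
  by_cases h : ∃ i, mk k a (X i) ∈ p
  · obtain ⟨i, hi⟩ := h
    exact ⟨i, fun j hji => mk_X_notMem_of_heightOne hn ha hp hji.symm hi⟩
  · exact ⟨⟨0, by omega⟩, fun j _ hj => h ⟨j, hj⟩⟩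

end HeightOnePrimes

section SaturationIndex

open MvPolynomial

variable {k : Type*} [Field k] {n : ℕ} {a : Fin n → ℕ}

lemma Mbar_le_zmultiples {p : Ideal (PBring k a)} {i : Fin n} (hi : mk k a (X i) ∈ p) :
    Mbar (PBpiece k a) p ≤ AddSubgroup.zmultiples ((Ltot a / Lpart a i : ℕ) : ℤ) := by
  refine (AddSubgroup.closure_le _).mpr fun m hm => ?_
  obtain ⟨_, hy, hfp⟩ := Set.not_subset.mp hm
  obtain ⟨f, hf, rfl⟩ := mem_PBpiece_iff.mp hy
  have hspan : Ideal.span (X '' {i}) ≤ p.comap (mk k a) := by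
    simpa [Ideal.span_singleton_le_iff_mem] using hi
  have hfX : f ∉ Ideal.span (X '' {i}) := fun h => hfp (hspan h)
  obtain ⟨e, he, hei⟩ : ∃ e ∈ f.support, e i = 0 := by
    rw [mem_ideal_span_X_image] at hfX
    simpa using hfX
  rw [SetLike.mem_coe, Int.mem_zmultiples_iff, ← hf e he, Int.natCast_dvd_natCast,
    dvd_weight_iff (fun j hji => Ltot_div_Lpart_dvd_xDegree hji), hei, zero_mul]
  exact dvd_zero _

lemma natCast_mem_Mbar [Nontrivial (Fin n)] {p : Ideal (PBring k a)} {i : Fin n}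
    (hi : ∀ j ≠ i, mk k a (X j) ∉ p) :
    ((Ltot a / Lpart a i : ℕ) : ℤ) ∈ Mbar (PBpiece k a) p := by
  rw [← gcd_erase_xDegree]
  refine natCast_gcd_mem fun j hj => AddSubgroup.subset_closure fun hsub => ?_
  exact hi j (Finset.ne_of_mem_erase hj) (hsub (mk_X_mem_PBpiece j))

lemma eB_PBpiece [Nontrivial (Fin n)] (ha : ∀ i, a i ≠ 0) : eB (PBpiece k a) = 1 := by
  have hone : ((1 : ℕ) : ℤ) ∈ Gsub (PBpiece k a) := by
    rw [← gcd_xDegree ha]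
    refine natCast_gcd_mem fun j _ => AddSubgroup.subset_closure fun hbot => ?_
    exact mk_X_ne_zero ha j (AddSubgroup.mem_bot.mp (hbot ▸ mk_X_mem_PBpiece j))
  have htop : Gsub (PBpiece k a) = AddSubgroup.zmultiples ((1 : ℕ) : ℤ) :=
    le_antisymm (fun m _ => by simp) (AddSubgroup.zmultiples_le.mpr hone)
  rw [eB, htop, groupGen_zmultiples]

lemma ebarB_PBpiece (hn : 3 ≤ n) (ha : ∀ i, a i ≠ 0) :
    ebarB (PBpiece k a) = ∏ i, Ltot a / Lpart a i := by
  have : Nontrivial (Fin n) := Fin.nontrivial_iff_two_le.mpr (by omega)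
  have hne : (homogHt1 (PBpiece k a)).Nonempty := by
    obtain ⟨p, hp, -⟩ := exists_mem_homogHt1_mk_X_mem (k := k) ha ⟨0, by omega⟩
    exact ⟨p, hp⟩
  rw [ebarB, if_pos hne, ← groupGen_zmultiples (∏ i, Ltot a / Lpart a i)]
  congr 1
  refine le_antisymm (fun m hm => ?_) (AddSubgroup.zmultiples_le.mpr ?_)
  · rw [Int.mem_zmultiples_iff, Nat.cast_prod]
    refine Finset.prod_dvd_of_coprime (fun i _ j _ hij =>
      Nat.isCoprime_iff_coprime.mpr (coprime_Ltot_div_Lpart ha hij)) fun i _ => ?_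
    obtain ⟨p, hp, hip⟩ := exists_mem_homogHt1_mk_X_mem (k := k) ha i
    exact Int.mem_zmultiples_iff.mp
      (Mbar_le_zmultiples hip (AddSubgroup.mem_iInf.mp hm ⟨p, hp⟩))
  · refine AddSubgroup.mem_iInf.mpr fun p => ?_
    obtain ⟨i, hi⟩ := exists_forall_ne_mk_X_notMem hn ha p.2.1
    rw [← Finset.prod_erase_mul _ _ (Finset.mem_univ i), Nat.cast_mul, ← smul_eq_mul]
    exact AddSubgroup.zsmul_mem _ (natCast_mem_Mbar hi) _

end SaturationIndex

section Veronese

open MvPolynomial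

variable {k : Type*} [Field k] {n : ℕ} {g b : Fin n → ℕ}

lemma powSubst_relation (k : Type*) [Field k] (g b : Fin n → ℕ) :
    powSubst g (relation k b) = relation k (g * b) := by
  simp only [relation, map_sum, map_pow, powSubst_X, ← pow_mul, Pi.mul_apply]

/-- The homomorphism `xᵢ ↦ xᵢ ^ gᵢ` of Pham–Brieskorn rings. -/
def powHom (k : Type*) [Field k] (g b : Fin n → ℕ) : PBring k b →+* PBring k (g * b) :=
  Ideal.quotientMap _ (powSubst g : MvPolynomial (Fin n) k →ₐ[k] _).toRingHom (by
    rw [Ideal.span_singleton_le_iff_mem, Ideal.mem_comap]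
    exact Ideal.mem_span_singleton.mpr (powSubst_relation k g b).symm.dvd)

lemma powHom_mk (p : MvPolynomial (Fin n) k) :
    powHom k g b (mk k b p) = mk k (g * b) (powSubst g p) :=
  Ideal.quotientMap_mk

lemma mk_powContract (hg : ∀ i, g i ≠ 0) {y : PBring k b} {q : MvPolynomial (Fin n) k}
    (h : powHom k g b y = mk k (g * b) q) : y = mk k b (powContract g hg q) := by
  obtain ⟨p, rfl⟩ := Ideal.Quotient.mk_surjective y
  rw [powHom_mk, Ideal.Quotient.eq, Ideal.mem_span_singleton'] at h
  obtain ⟨c, hc⟩ := h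
  rw [Ideal.Quotient.eq, Ideal.mem_span_singleton']
  refine ⟨powContract g hg c, ?_⟩
  rw [mul_comm, ← powContract_powSubst_mul hg, powSubst_relation, mul_comm, hc, map_sub,
    powContract_powSubst]

lemma powHom_injective (hg : ∀ i, g i ≠ 0) : Function.Injective (powHom k g b) := by
  refine (injective_iff_map_eq_zero _).mpr fun y hy => ?_
  rw [mk_powContract hg (hy.trans (map_zero _).symm), map_zero, map_zero]

lemma mk_mem_PBver {a : Fin n → ℕ} {d m : ℕ} (hdm : d ∣ m) {f : MvPolynomial (Fin n) k}
    (hf : IsWeightedHomogeneous (xDegree a) f m) : mk k a f ∈ PBver k a d :=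
  Subring.subset_closure
    (Set.mem_biUnion (x := (m : ℤ)) (Int.natCast_dvd_natCast.mpr hdm) (mk_mem_PBpiece hf))

lemma range_powHom_le_PBver {d : ℕ} (hd : ∀ i, d ∣ g i * xDegree (g * b) i) :
    (powHom k g b).range ≤ PBver k (g * b) d := by
  rintro _ ⟨y, rfl⟩
  obtain ⟨p, rfl⟩ := Ideal.Quotient.mk_surjective y
  rw [powHom_mk]
  induction p using MvPolynomial.induction_on with
  | C c =>
    rw [algHom_C, algebraMap_eq]
    exact mk_mem_PBver (dvd_zero d) (isWeightedHomogeneous_C _ c)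
  | add p q hp hq =>
    rw [map_add, map_add]
    exact add_mem hp hq
  | mul_X p i hp =>
    rw [map_mul, map_mul, powSubst_X]
    exact mul_mem hp (mk_mem_PBver (hd i) ((isWeightedHomogeneous_X k _ i).pow (g i)))

lemma PBver_le_range_powHom {d : ℕ}
    (hd : ∀ e : Fin n →₀ ℕ, d ∣ Finsupp.weight (xDegree (g * b)) e → ∀ i, g i ∣ e i) :
    PBver k (g * b) d ≤ (powHom k g b).range := by
  refine Subring.closure_le.mpr fun y hy => ?_
  obtain ⟨m, hdm, hy⟩ := Set.mem_iUnion₂.mp hy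
  obtain ⟨f, hf, rfl⟩ := mem_PBpiece_iff.mp hy
  rw [f.as_sum, map_sum]
  refine sum_mem fun e he => ?_
  have hde : d ∣ Finsupp.weight (xDegree (g * b)) e := by
    rw [← Int.natCast_dvd_natCast, hf e he]
    exact hdm
  choose e' he' using hd e hde
  have hsmul : g • Finsupp.equivFunOnFinite.symm e' = e := Finsupp.ext fun i => (he' i).symm
  refine ⟨mk k b (monomial (Finsupp.equivFunOnFinite.symm e') (coeff e f)), ?_⟩
  rw [powHom_mk, powSubst_monomial, hsmul]

lemma exists_mem_PBpiece_of_powHom_mem (hg : ∀ i, g i ≠ 0) (hb : ∀ i, b i ≠ 0) {m : ℤ}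
    {y : PBring k b} (hy : powHom k g b y ∈ PBpiece k (g * b) m) : ∃ m', y ∈ PBpiece k b m' := by
  obtain ⟨q, hq, hqy⟩ := mem_PBpiece_iff.mp hy
  set c := Ltot (g * b) / Ltot b
  have hweight (e : Fin n →₀ ℕ) :
      Finsupp.weight (xDegree (g * b)) (g • e) = c * Finsupp.weight (xDegree b) e := by
    simp only [Finsupp.weight_eq_sum, Finset.mul_sum]
    refine Finset.sum_congr rfl fun i _ => ?_
    rw [smul_eq_mul, smul_eq_mul, mul_left_comm, ← mul_xDegree_mul hg b]
    simp only [Finsupp.coe_pointwise_smul, Pi.smul_apply', smul_eq_mul]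
    ring
  have hc : (c : ℤ) ≠ 0 := Nat.cast_ne_zero.mpr <| (Nat.div_ne_zero_iff_of_dvd
    (Ltot_dvd_Ltot_mul g b)).mpr ⟨Ltot_ne_zero fun i => mul_ne_zero (hg i) (hb i), Ltot_ne_zero hb⟩
  refine ⟨m / c, mem_PBpiece_iff.mpr ⟨powContract g hg q, fun e he => ?_,
    (mk_powContract hg hqy.symm).symm⟩⟩
  have hm := hq (g • e) (by simpa [coeff_powContract] using he)
  rw [← hm, hweight, Nat.cast_mul, Int.mul_ediv_cancel_left _ hc]

lemma exists_ringEquiv_PBver {a : Fin n → ℕ} (ha : ∀ i, a i ≠ 0) {d : ℕ} (hgb : g * b = a)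
    (hweight : ∀ e : Fin n →₀ ℕ, d ∣ Finsupp.weight (xDegree a) e → ∀ i, g i ∣ e i)
    (hd : ∀ i, d ∣ g i * xDegree a i) :
    ∃ φ : PBver k a d ≃+* PBring k b, ∀ x : PBver k a d,
      (∃ m : ℤ, (x : PBring k a) ∈ PBpiece k a m) → ∃ m' : ℤ, φ x ∈ PBpiece k b m' := by
  subst hgb
  have hg (i) : g i ≠ 0 := left_ne_zero_of_mul (ha i)
  have hb (i) : b i ≠ 0 := right_ne_zero_of_mul (ha i)
  have hrange : (powHom k g b).range = PBver k (g * b) d :=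
    le_antisymm (range_powHom_le_PBver hd) (PBver_le_range_powHom hweight)
  let ψ : PBring k b ≃+* PBver k (g * b) d :=
    (RingEquiv.ofBijective (powHom k g b).rangeRestrict
      ⟨fun _ _ h => powHom_injective hg (congrArg Subtype.val h),
        (powHom k g b).rangeRestrict_surjective⟩).trans (RingEquiv.subringCongr hrange)
  refine ⟨ψ.symm, ?_⟩
  rintro x ⟨m, hm⟩
  obtain ⟨y, rfl⟩ := ψ.surjective x
  rw [ψ.symm_apply_apply]
  exact exists_mem_PBpiece_of_powHom_mem hg hb hm

end Veronese

end PBring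

theorem PhamBrieskorn_saturation_and_veronese_general {k : Type*} [Field k] (n : ℕ) (hn : 3 ≤ n)
    (a : Fin n → ℕ) (ha : ∀ i, 1 ≤ a i) :
    (∀ i j : Fin n, i ≠ j →
      Nat.Coprime (Ltot a / Lpart a i) (Ltot a / Lpart a j)) ∧
    (eB (PBpiece k a) = 1 ∧ ebarB (PBpiece k a) = ∏ i : Fin n, Ltot a / Lpart a i) ∧
    (ebarB (PBpiece k a) = eB (PBpiece k a) ↔ ∀ i : Fin n, Lpart a i = Ltot a) ∧
    (∀ d : ℕ, d ∣ ∏ i : Fin n, Ltot a / Lpart a i →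
      ∃ φ : (PBver k a d) ≃+* PBring k (PBexp a d),
        ∀ x : (PBver k a d), (∃ m : ℤ, (x : PBring k a) ∈ PBpiece k a m) →
          ∃ m' : ℤ, φ x ∈ PBpiece k (PBexp a d) m') := by
  have ha₀ (i : Fin n) : a i ≠ 0 := Nat.one_le_iff_ne_zero.mp (ha i)
  have : Nontrivial (Fin n) := Fin.nontrivial_iff_two_le.mpr (by omega)
  have he : eB (PBpiece k a) = 1 := PBring.eB_PBpiece ha₀
  have hebar : ebarB (PBpiece k a) = ∏ i, Ltot a / Lpart a i := PBring.ebarB_PBpiece hn ha₀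
  refine ⟨fun i j hij => PBring.coprime_Ltot_div_Lpart ha₀ hij, ⟨he, hebar⟩, ?_, fun d hd => ?_⟩
  · simp only [he, hebar, Finset.prod_eq_one_iff, Finset.mem_univ, true_imp_iff,
      PBring.Ltot_div_Lpart_eq_one_iff ha₀]
  · exact PBring.exists_ringEquiv_PBver ha₀ (PBring.gcd_mul_PBexp ha₀ d)
      (fun e he i => PBring.gcd_dvd_of_dvd_weight ha₀ he i) (PBring.dvd_gcd_mul_xDegree ha₀ hd)

/-- Let k be a field of characteristic 0, n ≥ 3 and a₁,…,aₙ ≥ 1, and let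
B = B_{k;a₁,…,aₙ} be the Pham–Brieskorn ring with its ℕ-grading.  Then:
(a) the integers L/L₁, …, L/Lₙ are pairwise relatively prime;
(b) e(B) = 1 and ē(B) = ∏ᵢ (L/Lᵢ);
(c) B is saturated in codimension 1 (ē(B) = e(B)) iff Lᵢ = L for every i;
(d) for every positive divisor d of ∏ᵢ (L/Lᵢ) there is a ring isomorphism from B^{(d)}
    onto B_{k;a₁′,…,aₙ′} mapping homogeneous elements to homogeneous elements, where
    aᵢ′ = gcd(aᵢ, Lᵢ)·((L/Lᵢ)/gcd(d, L/Lᵢ)). -/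
theorem PhamBrieskorn_saturation_and_veronese
    {k : Type*} [Field k] [CharZero k]
    (n : ℕ) (hn : 3 ≤ n) (a : Fin n → ℕ) (ha : ∀ i, 1 ≤ a i) :
    (∀ i j : Fin n, i ≠ j →
      Nat.Coprime (Ltot a / Lpart a i) (Ltot a / Lpart a j)) ∧
    (eB (PBpiece k a) = 1 ∧ ebarB (PBpiece k a) = ∏ i : Fin n, Ltot a / Lpart a i) ∧
    (ebarB (PBpiece k a) = eB (PBpiece k a) ↔ ∀ i : Fin n, Lpart a i = Ltot a) ∧
    (∀ d : ℕ, 0 < d → d ∣ ∏ i : Fin n, Ltot a / Lpart a i →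
      ∃ φ : (PBver k a d) ≃+* PBring k (PBexp a d),
        ∀ x : (PBver k a d), (∃ m : ℤ, (x : PBring k a) ∈ PBpiece k a m) →
          ∃ m' : ℤ, φ x ∈ PBpiece k (PBexp a d) m') := by
  obtain ⟨hcoprime, hindex, hsaturated, hveronese⟩ :=
    PhamBrieskorn_saturation_and_veronese_general (k := k) n hn a ha
  exact ⟨hcoprime, hindex, hsaturated, fun d _ => hveronese d⟩
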